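/- For $p\in\mathbb{R}[x_1,\dots,x_n]$ let $\mathrm{Support}(p)\subseteq\mathbb{N}^n\subseteq\mathbb{R}^n$ be the set of exponent vectors of the monomials that appear in $p$ with nonzero coefficient, and let $\mathrm{New}(p)$ be the convex hull of $\mathrm{Support}(p)$ in $\mathbb{R}^n$. A face of a polytope $N\subseteq\mathbb{R}^n$ is understood to be nonempty and proper: it is a set $F$ with $\emptyset\neq F\subsetneq N$ for which there is an affine function $\pi$ on $\mathbb{R}^n$ with $\pi=0$ on $F$ and $\pi>0$ on $N\setminus F$. Call $p$ a convex cover polynomial if there are pairwise disjoint faces $F_1,\dots,F_u$ of $\mathrm{New}(p)$ with $\mathrm{Support}(p)\subseteq F_1\cup\dots\cup F_u$. The Motzkin polynomial $f = x_1^4x_2^2 + x_1^2x_2^4 - 3x_1^2x_2^2 + 1 \in \mathbb{R}[x_1,x_2]$ is not a convex cover polynomial; indeed, its support point $(2,2)$ lies in the interior (in $\mathbb{R}^2$) of its Newton polytope $\mathrm{New}(f) = \mathrm{conv}\{(0,0),(4,2),(2,4)\}$. -/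

import Mathlib

open MvPolynomial

noncomputable section

/-- View an exponent vector `a ∈ ℕⁿ` as a point of `ℝⁿ`. -/
def toR {n : ℕ} (a : Fin n →₀ ℕ) : Fin n → ℝ := fun i => (a i : ℝ)

/-- The Newton polytope of `p`: the convex hull of its support in `ℝⁿ`. -/
def newton {n : ℕ} (p : MvPolynomial (Fin n) ℝ) : Set (Fin n → ℝ) :=
  convexHull ℝ (toR '' (p.support : Set (Fin n →₀ ℕ)))

/-- `F` is a face of the polytope `N`. Faces of a `d`-dimensional polytope have dimensions
`0, …, d - 1`: they are nonempty and different from `N`. A face is cut out by a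
supporting hyperplane: some affine function vanishes on `F` and is positive on `N \ F`. -/
def IsFace {n : ℕ} (N F : Set (Fin n → ℝ)) : Prop :=
  F ⊆ N ∧ F.Nonempty ∧ F ≠ N ∧
    ∃ π : (Fin n → ℝ) →ᵃ[ℝ] ℝ, (∀ x ∈ F, π x = 0) ∧ ∀ x ∈ N \ F, 0 < π x

/-- `p` is a convex cover polynomial: some pairwise disjoint faces of `New(p)`
cover `Support(p)`. -/
def IsConvexCover {n : ℕ} (p : MvPolynomial (Fin n) ℝ) : Prop :=
  ∃ (u : ℕ) (F : Fin u → Set (Fin n → ℝ)),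
    (∀ i, IsFace (newton p) (F i)) ∧
    (∀ i j, i ≠ j → Disjoint (F i) (F j)) ∧
    toR '' (p.support : Set (Fin n →₀ ℕ)) ⊆ ⋃ i, F i

end

open Filter Topology in
/-- A proper exposed face of a set contains no interior point of that set. -/
theorem IsFace.notMem_of_mem_interior {n : ℕ} {N F : Set (Fin n → ℝ)} (hF : IsFace N F)
    {x : Fin n → ℝ} (hx : x ∈ interior N) : x ∉ F := by
  obtain ⟨hFN, -, hne, π, h0, hpos⟩ := hF
  intro hxF
  obtain ⟨y, hyN, hyF⟩ : ∃ y ∈ N, y ∉ F := by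
    by_contra! h
    exact hne (hFN.antisymm h)
  have hcont : Tendsto (fun t : ℝ => AffineMap.lineMap x y t) (𝓝[<] 0) (𝓝 x) := by
    have h : Continuous (fun t : ℝ => AffineMap.lineMap x y t) := AffineMap.lineMap_continuous
    have h' := h.tendsto 0
    rw [AffineMap.lineMap_apply_zero] at h'
    exact h'.mono_left nhdsWithin_le_nhds
  obtain ⟨t, htN, ht⟩ := ((hcont.eventually (mem_interior_iff_mem_nhds.1 hx)).and
    self_mem_nhdsWithin).exists
  have hval : π (AffineMap.lineMap x y t) = t * π y := by
    rw [AffineMap.apply_lineMap, h0 x hxF, AffineMap.lineMap_apply]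
    simp
  have hneg : π (AffineMap.lineMap x y t) < 0 := by
    rw [hval]
    exact mul_neg_of_neg_of_pos ht (hpos y ⟨hyN, hyF⟩)
  by_cases hz : AffineMap.lineMap x y t ∈ F
  · exact hneg.ne (h0 _ hz)
  · exact hneg.not_gt (hpos _ ⟨htN, hz⟩)

/-- A polynomial with a support point interior to its Newton polytope is not a convex cover
polynomial. -/
theorem not_isConvexCover_of_mem_interior {n : ℕ} {p : MvPolynomial (Fin n) ℝ} {a : Fin n →₀ ℕ}
    (ha : a ∈ p.support) (hint : toR a ∈ interior (newton p)) : ¬ IsConvexCover p := by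
  rintro ⟨u, F, hF, -, hcov⟩
  obtain ⟨i, hi⟩ := Set.mem_iUnion.1 (hcov ⟨a, ha, rfl⟩)
  exact (hF i).notMem_of_mem_interior hint hi

/-- The bivariate exponent vector `(a, b)`. -/
noncomputable def bideg (a b : ℕ) : Fin 2 →₀ ℕ := Finsupp.single 0 a + Finsupp.single 1 b

theorem bideg_inj {a b c d : ℕ} : bideg a b = bideg c d ↔ a = c ∧ b = d := by
  constructor
  · intro h
    have h0 := DFunLike.congr_fun h 0
    have h1 := DFunLike.congr_fun h 1
    simp [bideg] at h0 h1
    exact ⟨h0, h1⟩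
  · rintro ⟨rfl, rfl⟩
    rfl

theorem toR_bideg (a b : ℕ) : toR (bideg a b) = ![(a : ℝ), (b : ℝ)] := by
  ext i
  fin_cases i <;> simp [toR, bideg]

theorem monomial_bideg (a b : ℕ) (c : ℝ) :
    monomial (bideg a b) c = C c * (X 0 ^ a * X 1 ^ b) := by
  rw [bideg, X_pow_eq_monomial, X_pow_eq_monomial, monomial_mul, C_mul_monomial]
  simp

theorem motzkin_eq_sum_monomial :
    ((X 0) ^ 4 * (X 1) ^ 2 + (X 0) ^ 2 * (X 1) ^ 4 - 3 * (X 0) ^ 2 * (X 1) ^ 2 + 1 :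
      MvPolynomial (Fin 2) ℝ) =
    monomial (bideg 4 2) 1 + monomial (bideg 2 4) 1 + monomial (bideg 2 2) (-3)
      + monomial (bideg 0 0) 1 := by
  simp only [monomial_bideg, map_neg, map_one, map_ofNat]
  ring

theorem motzkin_support :
    ((X 0) ^ 4 * (X 1) ^ 2 + (X 0) ^ 2 * (X 1) ^ 4 - 3 * (X 0) ^ 2 * (X 1) ^ 2 + 1 :
      MvPolynomial (Fin 2) ℝ).support = {bideg 4 2, bideg 2 4, bideg 2 2, bideg 0 0} := by
  rw [motzkin_eq_sum_monomial]
  ext m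
  simp only [mem_support_iff, coeff_add, coeff_monomial, Finset.mem_insert,
    Finset.mem_singleton]
  constructor
  · intro h
    by_contra! hm
    obtain ⟨h1, h2, h3, h4⟩ := hm
    simp [h1.symm, h2.symm, h3.symm, h4.symm] at h
  · rintro (rfl | rfl | rfl | rfl) <;> simp [bideg_inj]

theorem mem_convexHull_motzkin_triangle {x : Fin 2 → ℝ} (h0 : x 1 ≤ 2 * x 0) (h1 : x 0 ≤ 2 * x 1)
    (h2 : x 0 + x 1 ≤ 6) : x ∈ convexHull ℝ {![(0 : ℝ), 0], ![4, 2], ![2, 4]} := by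
  set s : Set (Fin 2 → ℝ) := {![(0 : ℝ), 0], ![4, 2], ![2, 4]} with hs
  have hsum := (convex_convexHull ℝ s).sum_mem (t := Finset.univ)
    (w := ![1 - (x 0 + x 1) / 6, (2 * x 0 - x 1) / 6, (2 * x 1 - x 0) / 6])
    (z := ![![(0 : ℝ), 0], ![4, 2], ![2, 4]])
    (by intro i _; fin_cases i <;> simp <;> linarith)
    (by simp [Fin.sum_univ_three]; ring)
    (by intro i _; apply subset_convexHull; fin_cases i <;> simp [hs])
  convert hsum using 1
  ext i
  fin_cases i <;> simp [Fin.sum_univ_three] <;> ring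

theorem motzkin_newton :
    newton ((X 0) ^ 4 * (X 1) ^ 2 + (X 0) ^ 2 * (X 1) ^ 4 - 3 * (X 0) ^ 2 * (X 1) ^ 2 + 1 :
      MvPolynomial (Fin 2) ℝ) = convexHull ℝ {![(0 : ℝ), 0], ![4, 2], ![2, 4]} := by
  rw [newton, motzkin_support]
  simp only [Finset.coe_insert, Finset.coe_singleton, Set.image_insert_eq, Set.image_singleton,
    toR_bideg, Nat.cast_ofNat, Nat.cast_zero]
  apply subset_antisymm
  · refine convexHull_min ?_ (convex_convexHull ℝ _)
    rintro x (rfl | rfl | rfl | rfl) <;>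
      exact mem_convexHull_motzkin_triangle (by norm_num) (by norm_num) (by norm_num)
  · apply convexHull_mono
    rintro x (rfl | rfl | rfl) <;> simp

theorem mem_interior_motzkin_triangle :
    ![(2 : ℝ), 2] ∈ interior (convexHull ℝ {![(0 : ℝ), 0], ![4, 2], ![2, 4]}) := by
  refine mem_interior.2 ⟨{x | x 1 < 2 * x 0} ∩ {x | x 0 < 2 * x 1} ∩ {x | x 0 + x 1 < 6},
    fun x hx => mem_convexHull_motzkin_triangle hx.1.1.le hx.1.2.le hx.2.le, ?_, ?_⟩
  · exact ((isOpen_lt (by fun_prop) (by fun_prop)).inter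
      (isOpen_lt (by fun_prop) (by fun_prop))).inter (isOpen_lt (by fun_prop) (by fun_prop))
  · norm_num

/-- The Motzkin polynomial is not a convex cover polynomial; its support point `(2,2)` lies in
the interior of its Newton polytope `conv{(0,0),(4,2),(2,4)}`. -/
theorem statement17 :
    let f : MvPolynomial (Fin 2) ℝ :=
      (X 0) ^ 4 * (X 1) ^ 2 + (X 0) ^ 2 * (X 1) ^ 4 - 3 * (X 0) ^ 2 * (X 1) ^ 2 + 1
    let e : Fin 2 →₀ ℕ := Finsupp.single 0 2 + Finsupp.single 1 2
    ¬ IsConvexCover f ∧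
    e ∈ f.support ∧
    toR e ∈ interior (newton f) ∧
    newton f = convexHull ℝ {![(0 : ℝ), 0], ![4, 2], ![2, 4]} := by
  intro f e
  have hsupp : e ∈ f.support := by
    rw [motzkin_support, show e = bideg 2 2 from rfl]
    simp
  have hint : toR e ∈ interior (newton f) := by
    rw [motzkin_newton, show e = bideg 2 2 from rfl, toR_bideg]
    exact_mod_cast mem_interior_motzkin_triangle
  exact ⟨not_isConvexCover_of_mem_interior hsupp hint, hsupp, hint, motzkin_newton⟩
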